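/- arXiv:1808.01179 — 4 statements merged into one kernel-verified Lean document; each statement's English description precedes it below -/
import Mathlib

section
/- Let k be an integer, m = 3k + 1 (so that m ≡ 1 (mod 3)), and d = 6m. Equip ℤ³ with basis e, f, ℓ and the symmetric bilinear form whose Gram matrix in this basis is G = [[0,1,0],[1,0,0],[0,0,d]] (i.e., a hyperbolic plane spanned by e, f, orthogonal to a vector ℓ of square d). Then the ℤ-linear map u defined by u(e) = −m·e + 3k²·f − k·ℓ, u(f) = 3·e − m·f + ℓ, u(ℓ) = 6m·e − 6mk·f + (2m−1)·ℓ is an isometry of this bilinear form, satisfies u ∘ u = id, and satisfies u(ℓ) ≡ (2m−1)·ℓ modulo d·ℤ³ (so u acts on the discriminant group ℤ/dℤ, generated by the class of ℓ/d, as multiplication by d/3 − 1). -/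
/-!
Put `v = 3e - 3k f + l`, a vector of square `6`. Its pairing with every vector is divisible by `3`,
say `(v, x) = 3 φ(x)`, so that `φ(v) = 2` and `x ↦ x - φ(x) v` is the reflection in `v`. The map `u`
is the negative of this reflection, `u(x) = φ(x) v - x`, which makes it an isometric involution.
Since `φ(l) = 2m`, also `u(l) = 2m v - l = (2m - 1) l + 6m (e - k f)`.
-/

section Orthogonal

variable {R M : Type*} [CommRing R] [AddCommGroup M] [Module R M]

theorem isOrthogonal_preReflection {B : LinearMap.BilinForm R M} (hB : B.IsSymm) {v : M}
    {φ : Module.Dual R M} {c : R} (hv : B v = c • φ) (hφ : φ v = 2) :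
    B.IsOrthogonal (Module.preReflection v φ) := by
  intro x y
  have left (z : M) : B v z = c * φ z := by rw [hv, LinearMap.smul_apply, smul_eq_mul]
  have right (z : M) : B z v = c * φ z := by rw [← left z]; exact hB.eq z v
  simp only [Module.preReflection_apply, map_sub, map_smul, LinearMap.sub_apply,
    LinearMap.smul_apply, smul_eq_mul, left, right, hφ]
  ring

theorem isOrthogonal_neg {B : LinearMap.BilinForm R M} {s : Module.End R M}
    (hs : B.IsOrthogonal s) : B.IsOrthogonal (-s : Module.End R M) := by
  intro x y
  rw [LinearMap.neg_apply, LinearMap.neg_apply, map_neg, map_neg, LinearMap.neg_apply, neg_neg]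
  exact hs x y

end Orthogonal

theorem involutive_neg {R M : Type*} [Ring R] [AddCommGroup M] [Module R M]
    {s : Module.End R M} (hs : Function.Involutive s) :
    Function.Involutive (-s : Module.End R M) := by
  intro x
  rw [LinearMap.neg_apply, LinearMap.neg_apply, map_neg, neg_neg]
  exact hs x

theorem linearMap_ext_fin_three {R M : Type*} [Semiring R] [AddCommMonoid M] [Module R M]
    {u u' : (Fin 3 → R) →ₗ[R] M}
    (h₀ : u ![1, 0, 0] = u' ![1, 0, 0]) (h₁ : u ![0, 1, 0] = u' ![0, 1, 0])
    (h₂ : u ![0, 0, 1] = u' ![0, 0, 1]) : u = u' := by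
  refine LinearMap.ext fun x => ?_
  have decompose : x = x 0 • ![1, 0, 0] + x 1 • ![0, 1, 0] + x 2 • ![0, 0, 1] := by
    ext i
    fin_cases i <;> simp
  rw [decompose]
  simp only [map_add, map_smul, h₀, h₁, h₂]

section HyperbolicPlane

variable {R : Type*} [CommRing R]

/-- The symmetric bilinear form of `U ⊕ Rl` in the basis `e, f, l`, where `e, f` span the hyperbolic
plane `U` and `l` has square `d`. -/
def hyperbolicSumForm (d : R) : LinearMap.BilinForm R (Fin 3 → R) :=
  Matrix.toBilin' !![0, 1, 0; 1, 0, 0; 0, 0, d]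

theorem hyperbolicSumForm_apply (d : R) (x y : Fin 3 → R) :
    hyperbolicSumForm d x y = x 0 * y 1 + x 1 * y 0 + d * (x 2 * y 2) := by
  simp only [hyperbolicSumForm, Matrix.toBilin'_apply', dotProduct, Matrix.mulVec,
    Fin.sum_univ_three, Matrix.of_apply, Matrix.cons_val]
  ring

theorem isSymm_hyperbolicSumForm (d : R) : (hyperbolicSumForm d).IsSymm where
  eq x y := by
    simp only [hyperbolicSumForm_apply]
    ring

/-- The vector `v = 3e - 3k f + l` of square `6` which is fixed by the involution `u`. -/
def fixedVector (k : R) : Fin 3 → R :=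
  (3 : R) • ![1, 0, 0] - (3 * k) • ![0, 1, 0] + ![0, 0, 1]

/-- The linear form `φ` such that `x ↦ x - φ x • v` is the reflection in `v = fixedVector k`: it is
one third of the pairing with `v` when `l` has square `6 * (3 * k + 1)`. -/
def fixedCoroot (k : R) : Module.Dual R (Fin 3 → R) :=
  -k • LinearMap.proj 0 + LinearMap.proj 1 + (2 * (3 * k + 1)) • LinearMap.proj 2

theorem fixedCoroot_e (k : R) : fixedCoroot k ![1, 0, 0] = -k := by
  simp [fixedCoroot]

theorem fixedCoroot_f (k : R) : fixedCoroot k ![0, 1, 0] = 1 := by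
  simp [fixedCoroot]

theorem fixedCoroot_l (k : R) : fixedCoroot k ![0, 0, 1] = 2 * (3 * k + 1) := by
  simp [fixedCoroot]

theorem fixedCoroot_fixedVector (k : R) : fixedCoroot k (fixedVector k) = 2 := by
  simp only [fixedVector, map_add, map_sub, map_smul, smul_eq_mul, fixedCoroot_e, fixedCoroot_f,
    fixedCoroot_l]
  ring

theorem hyperbolicSumForm_fixedVector (k : R) :
    hyperbolicSumForm (6 * (3 * k + 1)) (fixedVector k) = (3 : R) • fixedCoroot k := by
  apply linearMap_ext_fin_three <;>
    simp only [fixedVector, map_add, map_sub, map_smul, LinearMap.add_apply, LinearMap.sub_apply,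
      LinearMap.smul_apply, smul_eq_mul, hyperbolicSumForm_apply, Matrix.cons_val, fixedCoroot_e,
      fixedCoroot_f, fixedCoroot_l] <;>
    ring

/-- The involution `u` of `U ⊕ Rl`, encoded as the negative of the reflection in `fixedVector k`. -/
def latticeInvolution (k : R) : Module.End R (Fin 3 → R) :=
  -Module.preReflection (fixedVector k) (fixedCoroot k)

theorem latticeInvolution_apply (k : R) (x : Fin 3 → R) :
    latticeInvolution k x = fixedCoroot k x • fixedVector k - x := by
  rw [latticeInvolution, LinearMap.neg_apply, Module.preReflection_apply, neg_sub]

theorem isOrthogonal_latticeInvolution (k : R) :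
    (hyperbolicSumForm (6 * (3 * k + 1))).IsOrthogonal (latticeInvolution k) :=
  isOrthogonal_neg <| isOrthogonal_preReflection (isSymm_hyperbolicSumForm _)
    (hyperbolicSumForm_fixedVector k) (fixedCoroot_fixedVector k)

theorem involutive_latticeInvolution (k : R) : Function.Involutive (latticeInvolution k) :=
  involutive_neg <| Module.involutive_preReflection (fixedCoroot_fixedVector k)

theorem latticeInvolution_e (k : R) :
    latticeInvolution k ![1, 0, 0] =
      (-(3 * k + 1)) • ![1, 0, 0] + (3 * k ^ 2) • ![0, 1, 0] + (-k) • ![0, 0, 1] := by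
  rw [latticeInvolution_apply, fixedCoroot_e, fixedVector]
  module

theorem latticeInvolution_f (k : R) :
    latticeInvolution k ![0, 1, 0] =
      (3 : R) • ![1, 0, 0] + (-(3 * k + 1)) • ![0, 1, 0] + ![0, 0, 1] := by
  rw [latticeInvolution_apply, fixedCoroot_f, fixedVector]
  module

theorem latticeInvolution_l (k : R) :
    latticeInvolution k ![0, 0, 1] =
      (2 * (3 * k + 1) - 1) • ![0, 0, 1] +
        (6 * (3 * k + 1)) • (![1, 0, 0] - k • ![0, 1, 0]) := by
  rw [latticeInvolution_apply, fixedCoroot_l, fixedVector]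
  module

end HyperbolicPlane

theorem stmt0_general {R : Type*} [CommRing R] (k m d : R) (hm : m = 3 * k + 1) (hd : d = 6 * m)
    (e f l : Fin 3 → R)
    (he : e = ![1, 0, 0]) (hf : f = ![0, 1, 0]) (hl : l = ![0, 0, 1])
    (B : (Fin 3 → R) → (Fin 3 → R) → R)
    (hB : ∀ x y, B x y = x 0 * y 1 + x 1 * y 0 + d * (x 2 * y 2))
    (u : (Fin 3 → R) →ₗ[R] (Fin 3 → R))
    (hue : u e = (-m) • e + (3 * k ^ 2) • f + (-k) • l)
    (huf : u f = (3 : R) • e + (-m) • f + l)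
    (hul : u l = (6 * m) • e + (-(6 * m * k)) • f + (2 * m - 1) • l) :
    (∀ x y, B (u x) (u y) = B x y) ∧
    (∀ x, u (u x) = x) ∧
    (∃ w : Fin 3 → R, u l = (2 * m - 1) • l + d • w) := by
  subst hm hd he hf hl
  have B_eq (x y : Fin 3 → R) : B x y = hyperbolicSumForm (6 * (3 * k + 1)) x y := by
    rw [hB, hyperbolicSumForm_apply]
  have u_eq : u = latticeInvolution k := by
    apply linearMap_ext_fin_three
    · rw [hue, latticeInvolution_e]
    · rw [huf, latticeInvolution_f]
    · rw [hul, latticeInvolution_l]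
      module
  subst u_eq
  refine ⟨fun x y => ?_, involutive_latticeInvolution k, ![1, 0, 0] - k • ![0, 1, 0],
    latticeInvolution_l k⟩
  rw [B_eq, B_eq, isOrthogonal_latticeInvolution]

/-- The explicit orthogonal involution `u` of the lattice `ℤℓ_d ⊕ U`
(here `ℤ³` with basis `e, f, l`, Gram matrix `[[0,1,0],[1,0,0],[0,0,d]]`),
where `d = 6m`, `m = 3k + 1`: `u` is an isometry, an involution, and acts on
the discriminant group as multiplication by `2m - 1 = d/3 - 1`. -/
theorem stmt0 (k m d : ℤ) (hm : m = 3 * k + 1) (hd : d = 6 * m)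
    (e f l : Fin 3 → ℤ)
    (he : e = ![1, 0, 0]) (hf : f = ![0, 1, 0]) (hl : l = ![0, 0, 1])
    (B : (Fin 3 → ℤ) → (Fin 3 → ℤ) → ℤ)
    (hB : ∀ x y, B x y = x 0 * y 1 + x 1 * y 0 + d * (x 2 * y 2))
    (u : (Fin 3 → ℤ) →ₗ[ℤ] (Fin 3 → ℤ))
    (hue : u e = (-m) • e + (3 * k ^ 2) • f + (-k) • l)
    (huf : u f = (3 : ℤ) • e + (-m) • f + l)
    (hul : u l = (6 * m) • e + (-(6 * m * k)) • f + (2 * m - 1) • l) :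
    (∀ x y, B (u x) (u y) = B x y) ∧
    (∀ x, u (u x) = x) ∧
    (∃ w : Fin 3 → ℤ, u l = (2 * m - 1) • l + d • w) := by
  exact stmt0_general k m d hm hd e f l he hf hl B hB u hue huf hul
end

section
/- Let m be an integer. There exist integers a, n with a²·(6m) = 2·(n² + n + 1) if and only if there exist integers p, q with p odd, q even, and 3·p² − m·q² = −1. -/
/-!
Since `n² + n + 1 = (n - 1)² + 3n`, divisibility by the prime `3` forces `n = 3k + 1`, and then
Addington's condition reduces to `m a² = 3k² + 3k + 1`. Multiplying by `4` and completing the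
square, this is `m (2a)² = 3 (2k + 1)² + 1`, the Pell-type equation with `p = 2k + 1` and `q = 2a`.
-/

section PrimeThree

variable {R : Type*} [CommRing R]

theorem two_ne_zero_of_not_isUnit_three (h3 : ¬IsUnit (3 : R)) : (2 : R) ≠ 0 := by
  intro h2
  have three_eq_one : (3 : R) = 1 := by linear_combination h2
  exact h3 (three_eq_one ▸ isUnit_one)

theorem three_dvd_sq_add_self_add_one_iff (h3 : Prime (3 : R)) {n : R} :
    3 ∣ n ^ 2 + n + 1 ↔ 3 ∣ n - 1 := by
  rw [show n ^ 2 + n + 1 = (n - 1) ^ 2 + 3 * n by ring, dvd_add_left (dvd_mul_right 3 n),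
    h3.dvd_pow_iff_dvd two_ne_zero]

variable [IsDomain R]

theorem exists_sq_mul_six_mul_eq_iff (h3 : Prime (3 : R)) (m : R) :
    (∃ a n : R, a ^ 2 * (6 * m) = 2 * (n ^ 2 + n + 1)) ↔
      ∃ a k : R, m * a ^ 2 = 3 * k ^ 2 + 3 * k + 1 := by
  constructor
  · rintro ⟨a, n, h⟩
    have h2 : (2 : R) ≠ 0 := two_ne_zero_of_not_isUnit_three h3.not_isUnit
    have hn : n ^ 2 + n + 1 = 3 * (m * a ^ 2) :=
      mul_left_cancel₀ h2 (by linear_combination -h)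
    obtain ⟨k, hk⟩ : 3 ∣ n - 1 := (three_dvd_sq_add_self_add_one_iff h3).mp ⟨_, hn⟩
    obtain rfl : n = 3 * k + 1 := by linear_combination hk
    exact ⟨a, k, mul_left_cancel₀ h3.ne_zero (by linear_combination -hn)⟩
  · rintro ⟨a, k, h⟩
    exact ⟨a, 3 * k + 1, by linear_combination 6 * h⟩

theorem exists_odd_even_three_mul_sq_sub_eq_neg_one_iff (h2 : (2 : R) ≠ 0) (m : R) :
    (∃ p q : R, Odd p ∧ Even q ∧ 3 * p ^ 2 - m * q ^ 2 = -1) ↔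
      ∃ a k : R, m * a ^ 2 = 3 * k ^ 2 + 3 * k + 1 := by
  constructor
  · rintro ⟨_, _, ⟨k, rfl⟩, ⟨a, rfl⟩, h⟩
    exact ⟨a, k, mul_left_cancel₀ (pow_ne_zero 2 h2) (by linear_combination -h)⟩
  · rintro ⟨a, k, h⟩
    exact ⟨2 * k + 1, 2 * a, odd_two_mul_add_one k, even_two_mul a, by linear_combination -4 * h⟩

theorem stmt4_general (h3 : Prime (3 : R)) (m : R) :
    (∃ a n : R, a ^ 2 * (6 * m) = 2 * (n ^ 2 + n + 1)) ↔
      ∃ p q : R, Odd p ∧ Even q ∧ 3 * p ^ 2 - m * q ^ 2 = -1 :=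
  have h2 : (2 : R) ≠ 0 := two_ne_zero_of_not_isUnit_three h3.not_isUnit
  (exists_sq_mul_six_mul_eq_iff h3 m).trans
    (exists_odd_even_three_mul_sq_sub_eq_neg_one_iff h2 m).symm

end PrimeThree

/-- Addington's condition `a² (6m) = 2 (n² + n + 1)` is solvable iff
`3p² − m q² = −1` is solvable with `p` odd and `q` even. -/
theorem stmt4 (m : ℤ) :
    (∃ a n : ℤ, a ^ 2 * (6 * m) = 2 * (n ^ 2 + n + 1)) ↔
    (∃ p q : ℤ, Odd p ∧ Even q ∧ 3 * p ^ 2 - m * q ^ 2 = -1) :=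
  stmt4_general Int.prime_three m
end

section
/- There are no integers x, y with x² − 219·y² = −3. Consequently, there are no integers p, q with 3·p² − 73·q² = −1. -/
/-
Multiplication by the units of norm one partitions the elements of a given norm in `ℤ√d` into
orbits. In each orbit the coefficient of `√d` smallest in absolute value is bounded in terms of the
norm and any one solution of Pell's equation (Nagell). For `d = 219` the solution
`74 ^ 2 - 219 * 5 ^ 2 = 1` is so small that for norm `-3` this coefficient has to vanish, which
would make `-3` a square.
-/

open Pell

section PellOrbits

variable {d : ℤ} (a : Solution₁ d) (z : ℤ√d)

theorem norm_mul_pell_solution : (z * a).norm = z.norm := by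
  rw [Zsqrtd.norm_mul, Zsqrtd.norm_eq_one_iff_mem_unitary.mpr a.2, mul_one]

theorem im_mul_pell_solution : (z * a).im = z.re * a.y + z.im * a.x :=
  Zsqrtd.im_mul z a

theorem im_sq_sub_im_sq_mul_im_sq_sub_im_sq :
    ((z * a).im ^ 2 - z.im ^ 2) * ((z * (a⁻¹ : Solution₁ d)).im ^ 2 - z.im ^ 2) =
      (a.y ^ 2 * z.norm + 2 * (a.x - 1) * z.im ^ 2) *
        (a.y ^ 2 * z.norm - 2 * (a.x + 1) * z.im ^ 2) := by
  have factor_sub : a.y ^ 2 * z.norm + 2 * (a.x - 1) * z.im ^ 2 =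
      (z.re * a.y) ^ 2 - (a.x - 1) ^ 2 * z.im ^ 2 := by
    rw [Zsqrtd.norm_def]
    linear_combination z.im ^ 2 * a.prop
  have factor_add : a.y ^ 2 * z.norm - 2 * (a.x + 1) * z.im ^ 2 =
      (z.re * a.y) ^ 2 - (a.x + 1) ^ 2 * z.im ^ 2 := by
    rw [Zsqrtd.norm_def]
    linear_combination z.im ^ 2 * a.prop
  rw [factor_sub, factor_add, im_mul_pell_solution, im_mul_pell_solution, Solution₁.x_inv,
    Solution₁.y_inv]
  -- Both sides are the product of the linear forms `z.re * a.y ± (a.x ± 1) * z.im`, paired by the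
  -- outer sign on the left and by the inner sign on the right.
  ring

variable {a z} in
theorem two_mul_sub_one_mul_im_sq_le_of_im_sq_le
    (h_mul : z.im ^ 2 ≤ (z * a).im ^ 2) (h_inv : z.im ^ 2 ≤ (z * (a⁻¹ : Solution₁ d)).im ^ 2) :
    2 * (a.x - 1) * z.im ^ 2 ≤ a.y ^ 2 * |z.norm| := by
  by_contra! h_lt
  have abs_norm_lt : |a.y ^ 2 * z.norm| < 2 * (a.x - 1) * z.im ^ 2 := by
    rwa [abs_mul, abs_sq]
  obtain ⟨neg_lt_norm, norm_lt⟩ := abs_lt.mp abs_norm_lt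
  have factor_pos : 0 < a.y ^ 2 * z.norm + 2 * (a.x - 1) * z.im ^ 2 := by linarith
  have factor_neg : a.y ^ 2 * z.norm - 2 * (a.x + 1) * z.im ^ 2 < 0 := by
    linarith [sq_nonneg z.im]
  have prod_nonneg := mul_nonneg (sub_nonneg.mpr h_mul) (sub_nonneg.mpr h_inv)
  rw [im_sq_sub_im_sq_mul_im_sq_sub_im_sq] at prod_nonneg
  exact prod_nonneg.not_gt (mul_neg_of_pos_of_neg factor_pos factor_neg)

theorem exists_two_mul_sub_one_mul_im_sq_le :
    ∃ b : Solution₁ d, 2 * (a.x - 1) * (z * b).im ^ 2 ≤ a.y ^ 2 * |z.norm| := by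
  let height : Solution₁ d → ℕ := fun b => (z * b).im.natAbs
  let b := Function.argmin height
  have im_sq_le (c : Solution₁ d) : (z * b).im ^ 2 ≤ (z * b * c).im ^ 2 := by
    have h : height b ≤ height (b * c) := Function.argmin_le height (b * c)
    rw [mul_assoc]
    exact Int.natAbs_le_iff_sq_le.mp h
  refine ⟨b, ?_⟩
  rw [← norm_mul_pell_solution b z]
  exact two_mul_sub_one_mul_im_sq_le_of_im_sq_le (im_sq_le a) (im_sq_le a⁻¹)

variable {a z} in
theorem isSquare_norm_of_mul_abs_norm_lt (h : a.y ^ 2 * |z.norm| < 2 * (a.x - 1)) :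
    IsSquare z.norm := by
  obtain ⟨b, hb⟩ := exists_two_mul_sub_one_mul_im_sq_le a z
  have x_pos : 0 < 2 * (a.x - 1) := h.trans_le' (by positivity)
  have im_sq_lt_one : (z * b).im ^ 2 < 1 :=
    lt_of_mul_lt_mul_left (by simpa only [mul_one] using hb.trans_lt h) x_pos.le
  have im_eq_zero : (z * b).im = 0 :=
    Int.abs_lt_one_iff.mp ((sq_lt_one_iff_abs_lt_one _).mp im_sq_lt_one)
  refine ⟨(z * b).re, ?_⟩
  rw [← norm_mul_pell_solution b z, Zsqrtd.norm_def, im_eq_zero, mul_zero, sub_zero]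

end PellOrbits

theorem norm_zsqrtd_219_ne_neg_three (z : ℤ√219) : z.norm ≠ -3 := by
  intro hz
  let a : Solution₁ 219 := .mk 74 5 (by norm_num)
  have small : a.y ^ 2 * |z.norm| < 2 * (a.x - 1) := by
    rw [hz, Solution₁.x_mk, Solution₁.y_mk]
    norm_num
  have norm_nonneg : 0 ≤ z.norm := (isSquare_norm_of_mul_abs_norm_lt small).nonneg
  omega

theorem sq_sub_219_mul_sq_ne_neg_three (x y : ℤ) : x ^ 2 - 219 * y ^ 2 ≠ -3 := by
  have h := norm_zsqrtd_219_ne_neg_three ⟨x, y⟩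
  rwa [Zsqrtd.norm_def, mul_assoc, ← sq, ← sq] at h

/-- `x² − 219 y² = −3` has no integer solutions; consequently
`3p² − 73 q² = −1` has no integer solutions. -/
theorem stmt7 :
    (¬ ∃ x y : ℤ, x ^ 2 - 219 * y ^ 2 = -3) ∧
    (¬ ∃ p q : ℤ, 3 * p ^ 2 - 73 * q ^ 2 = -1) := by
  refine ⟨fun ⟨x, y, h⟩ => sq_sub_219_mul_sq_ne_neg_three x y h, fun ⟨p, q, h⟩ => ?_⟩
  have h_triple : (3 * p) ^ 2 - 219 * q ^ 2 = -3 := by linear_combination 3 * h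
  exact sq_sub_219_mul_sq_ne_neg_three (3 * p) q h_triple
end

section
/- Let m be an odd integer. There exist integers p, q with 3·p² − m·q² = −1 if and only if there exist integers p, q with 12·p² − m·q² = −1, or integers p, q with 3·p² − 4m·q² = −1. -/
/-!
If `a`, `b` and `c` are odd, then reducing `a * x ^ 2 - b * y ^ 2 = c` modulo `2` shows that exactly
one of `x` and `y` is even. Absorbing the factor `2` of that variable into its coefficient
multiplies the coefficient by `4`.
-/

section Rescaling

variable {R : Type*} [CommRing R] {a b c : R}

theorem exists_even_left_mul_sq_sub_mul_sq_eq_iff :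
    (∃ x y : R, Even x ∧ a * x ^ 2 - b * y ^ 2 = c) ↔
      ∃ x y : R, 4 * a * x ^ 2 - b * y ^ 2 = c := by
  constructor
  · rintro ⟨_, y, ⟨x, rfl⟩, h⟩
    exact ⟨x, y, by linear_combination h⟩
  · rintro ⟨x, y, h⟩
    exact ⟨x + x, y, .add_self x, by linear_combination h⟩

theorem exists_even_right_mul_sq_sub_mul_sq_eq_iff :
    (∃ x y : R, Even y ∧ a * x ^ 2 - b * y ^ 2 = c) ↔
      ∃ x y : R, a * x ^ 2 - 4 * b * y ^ 2 = c := by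
  constructor
  · rintro ⟨x, _, ⟨y, rfl⟩, h⟩
    exact ⟨x, y, by linear_combination h⟩
  · rintro ⟨x, y, h⟩
    exact ⟨x, y + y, .add_self y, by linear_combination h⟩

end Rescaling

section Parity

variable {a b : ℤ}

theorem odd_mul_sq_sub_mul_sq_iff (ha : Odd a) (hb : Odd b) {x y : ℤ} :
    Odd (a * x ^ 2 - b * y ^ 2) ↔ (Odd x ↔ Even y) := by
  simp [Int.odd_sub, Int.odd_mul, Int.even_mul, Int.odd_pow, Int.even_pow, ha, hb]

theorem even_or_even_of_odd_mul_sq_sub_mul_sq (ha : Odd a) (hb : Odd b) {x y : ℤ}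
    (h : Odd (a * x ^ 2 - b * y ^ 2)) : Even x ∨ Even y :=
  (Int.even_or_odd x).imp_right ((odd_mul_sq_sub_mul_sq_iff ha hb).mp h).mp

end Parity

theorem stmt10_general {a b c : ℤ} (ha : Odd a) (hb : Odd b) (hc : Odd c) :
    (∃ x y : ℤ, a * x ^ 2 - b * y ^ 2 = c) ↔
      (∃ x y : ℤ, 4 * a * x ^ 2 - b * y ^ 2 = c) ∨
        (∃ x y : ℤ, a * x ^ 2 - 4 * b * y ^ 2 = c) := by
  rw [← exists_even_left_mul_sq_sub_mul_sq_eq_iff, ← exists_even_right_mul_sq_sub_mul_sq_eq_iff]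
  constructor
  · rintro ⟨x, y, rfl⟩
    exact (even_or_even_of_odd_mul_sq_sub_mul_sq ha hb hc).imp
      (fun hx ↦ ⟨x, y, hx, rfl⟩) (fun hy ↦ ⟨x, y, hy, rfl⟩)
  · rintro (⟨x, y, -, h⟩ | ⟨x, y, -, h⟩) <;> exact ⟨x, y, h⟩

/-- For `m` odd, `3p² − m q² = −1` is solvable iff `12p² − m q² = −1` or
`3p² − 4m q² = −1` is solvable. -/
theorem stmt10 (m : ℤ) (hm : Odd m) :
    (∃ p q : ℤ, 3 * p ^ 2 - m * q ^ 2 = -1) ↔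
    ((∃ p q : ℤ, 12 * p ^ 2 - m * q ^ 2 = -1) ∨
     (∃ p q : ℤ, 3 * p ^ 2 - 4 * m * q ^ 2 = -1)) :=
  stmt10_general (a := 3) (by decide) hm (by decide)
end
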